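/- Let u_1, …, u_n ∈ ℝ^k and v_1, …, v_n ∈ ℝ^k, and let h > 0. Define the Nadaraya–Watson map G : ℝ^k → ℝ^k by G(ξ) := Σ_{i=1}^n exp(−‖ξ − u_i‖²/h²) v_i / Σ_{j=1}^n exp(−‖ξ − u_j‖²/h²). Then G is Lipschitz continuous with Lipschitz constant at most 2 · D_u · D_v / h², where D_u := max_{i,j} ‖u_i − u_j‖₂ and D_v := max_{i,j} ‖v_i − v_j‖₂. -/

import Mathlib

open MeasureTheory ENNReal

noncomputable section

abbrev Euc (k : ℕ) : Type := EuclideanSpace ℝ (Fin k)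

/-- The Nadaraya–Watson kernel-regression map with Gaussian kernel:
`G(ξ) = Σ_i exp(-‖ξ - u_i‖²/h²) v_i / Σ_j exp(-‖ξ - u_j‖²/h²)`. -/
def nwGauss {k : ℕ} {n : ℕ} (u v : Fin n → Euc k) (h : ℝ) (ξ : Euc k) : Euc k :=
  (∑ j : Fin n, Real.exp (-(‖ξ - u j‖ ^ 2) / h ^ 2))⁻¹ •
    ∑ i : Fin n, Real.exp (-(‖ξ - u i‖ ^ 2) / h ^ 2) • v i

/-!
Write `p i`, `q i` for the kernel weights at `ξ` and `ξ'`. Symmetrizing over pairs of indices,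
the difference of the two weighted means is, up to the factor `2 (∑ p) (∑ q)`, the sum of
`(p i * q j - p j * q i) • (v i - v j)`. Both products are exponentials, and in the difference of
their exponents the squared norms cancel, leaving `2 ⟪ξ - ξ', u i - u j⟫ / h ^ 2`. By
`|exp x - exp y| ≤ |x - y| (exp x + exp y)`, each coefficient is then at most
`2 * Du * ‖ξ - ξ'‖ / h ^ 2` times `p i * q j + p j * q i`, and these sums of products add up to
exactly `2 (∑ p) (∑ q)`.
-/

section CenterMass

variable {ι R F : Type*}

theorem sum_mul_sum_smul_centerMass_sub_centerMass [Field R] [AddCommGroup F] [Module R F]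
    (t : Finset ι) {p q : ι → R} (v : ι → F) (hp : ∑ i ∈ t, p i ≠ 0) (hq : ∑ i ∈ t, q i ≠ 0) :
    ((∑ i ∈ t, p i) * ∑ i ∈ t, q i) • (t.centerMass p v - t.centerMass q v) =
      ∑ i ∈ t, ∑ j ∈ t, (p i * q j) • (v i - v j) := by
  have left_sum : ∑ i ∈ t, ∑ j ∈ t, (p i * q j) • v i =
      (∑ j ∈ t, q j) • ∑ i ∈ t, p i • v i := by
    simp only [← Finset.sum_smul, ← Finset.mul_sum, Finset.smul_sum, smul_smul, mul_comm]
  have right_sum : ∑ i ∈ t, ∑ j ∈ t, (p i * q j) • v j =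
      (∑ i ∈ t, p i) • ∑ j ∈ t, q j • v j := by
    simp only [mul_smul, ← Finset.smul_sum, ← Finset.sum_smul]
  simp only [smul_sub, Finset.sum_sub_distrib, left_sum, right_sum, Finset.centerMass, smul_smul]
  rw [mul_right_comm, mul_inv_cancel₀ hp, one_mul, mul_assoc, mul_inv_cancel₀ hq, mul_one]

theorem two_mul_sum_mul_sum_smul_centerMass_sub_centerMass [Field R] [AddCommGroup F] [Module R F]
    (t : Finset ι) {p q : ι → R} (v : ι → F) (hp : ∑ i ∈ t, p i ≠ 0) (hq : ∑ i ∈ t, q i ≠ 0) :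
    (2 * ((∑ i ∈ t, p i) * ∑ i ∈ t, q i)) • (t.centerMass p v - t.centerMass q v) =
      ∑ i ∈ t, ∑ j ∈ t, (p i * q j - p j * q i) • (v i - v j) := by
  have swapped : ∑ i ∈ t, ∑ j ∈ t, (p i * q j) • (v i - v j) =
      ∑ i ∈ t, ∑ j ∈ t, -(p j * q i) • (v i - v j) := by
    rw [Finset.sum_comm]
    simp only [neg_smul, ← smul_neg, neg_sub]
  rw [two_mul, add_smul, sum_mul_sum_smul_centerMass_sub_centerMass t v hp hq]
  nth_rw 2 [swapped]
  simp only [← Finset.sum_add_distrib, ← add_smul, ← sub_eq_add_neg]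

theorem norm_centerMass_sub_centerMass_le [SeminormedAddCommGroup F] [NormedSpace ℝ F]
    {t : Finset ι} {p q : ι → ℝ} {v : ι → F} {c D : ℝ}
    (hp : 0 < ∑ i ∈ t, p i) (hq : 0 < ∑ i ∈ t, q i)
    (hpq : ∀ i ∈ t, ∀ j ∈ t, |p i * q j - p j * q i| ≤ c * (p i * q j + p j * q i))
    (hv : ∀ i ∈ t, ∀ j ∈ t, ‖v i - v j‖ ≤ D) :
    ‖t.centerMass p v - t.centerMass q v‖ ≤ c * D := by
  set S := 2 * ((∑ i ∈ t, p i) * ∑ i ∈ t, q i) with hS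
  have S_pos : 0 < S := by positivity
  have term_le : ∀ i ∈ t, ∀ j ∈ t, ‖(p i * q j - p j * q i) • (v i - v j)‖ ≤
      c * (p i * q j + p j * q i) * D := fun i hi j hj => by
    rw [norm_smul, Real.norm_eq_abs]
    exact mul_le_mul (hpq i hi j hj) (hv i hi j hj) (norm_nonneg _)
      ((abs_nonneg _).trans (hpq i hi j hj))
  have sum_eq : ∑ i ∈ t, ∑ j ∈ t, (p i * q j + p j * q i) = S := by
    simp only [Finset.sum_add_distrib, ← Finset.mul_sum, ← Finset.sum_mul, hS]
    ring
  refine le_of_mul_le_mul_left ?_ S_pos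
  calc S * ‖t.centerMass p v - t.centerMass q v‖
      = ‖S • (t.centerMass p v - t.centerMass q v)‖ := (norm_smul_of_nonneg S_pos.le _).symm
    _ = ‖∑ i ∈ t, ∑ j ∈ t, (p i * q j - p j * q i) • (v i - v j)‖ := by
        rw [hS, two_mul_sum_mul_sum_smul_centerMass_sub_centerMass t v hp.ne' hq.ne']
    _ ≤ ∑ i ∈ t, ∑ j ∈ t, c * (p i * q j + p j * q i) * D :=
        norm_sum_le_of_le t fun i hi => norm_sum_le_of_le t (term_le i hi)
    _ = S * (c * D) := by
        simp only [← Finset.sum_mul, ← Finset.mul_sum, sum_eq]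
        ring

end CenterMass

section Exponential

theorem exp_sub_exp_le_sub_mul_exp (x y : ℝ) :
    Real.exp x - Real.exp y ≤ (x - y) * Real.exp x := by
  have tangent := mul_le_mul_of_nonneg_right (Real.add_one_le_exp (y - x)) (Real.exp_nonneg x)
  rw [← Real.exp_add, sub_add_cancel] at tangent
  linarith

theorem abs_exp_sub_exp_le (x y : ℝ) :
    |Real.exp x - Real.exp y| ≤ |x - y| * (Real.exp x + Real.exp y) := by
  wlog hxy : y ≤ x generalizing x y
  · rw [abs_sub_comm, abs_sub_comm x, add_comm]
    exact this y x (le_of_not_ge hxy)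
  rw [abs_of_nonneg (sub_nonneg.2 (Real.exp_le_exp.2 hxy)), abs_of_nonneg (sub_nonneg.2 hxy)]
  calc Real.exp x - Real.exp y
      ≤ (x - y) * Real.exp x := exp_sub_exp_le_sub_mul_exp x y
    _ ≤ (x - y) * (Real.exp x + Real.exp y) :=
        mul_le_mul_of_nonneg_left (le_add_of_nonneg_right (Real.exp_nonneg y)) (sub_nonneg.2 hxy)

theorem norm_centerMass_exp_sub_centerMass_exp_le {ι F : Type*} [SeminormedAddCommGroup F]
    [NormedSpace ℝ F] {t : Finset ι} (ht : t.Nonempty) {a b : ι → ℝ} {v : ι → F} {δ D : ℝ}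
    (hab : ∀ i ∈ t, ∀ j ∈ t, |(a i - b i) - (a j - b j)| ≤ δ)
    (hv : ∀ i ∈ t, ∀ j ∈ t, ‖v i - v j‖ ≤ D) :
    ‖t.centerMass (fun i => Real.exp (a i)) v - t.centerMass (fun i => Real.exp (b i)) v‖ ≤
      δ * D := by
  refine norm_centerMass_sub_centerMass_le
    (Finset.sum_pos (fun i _ => Real.exp_pos _) ht)
    (Finset.sum_pos (fun i _ => Real.exp_pos _) ht) (fun i hi j hj => ?_) hv
  simp only [← Real.exp_add]
  refine (abs_exp_sub_exp_le _ _).trans (mul_le_mul_of_nonneg_right ?_ (by positivity))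
  have exponent_sub : a i + b j - (a j + b i) = (a i - b i) - (a j - b j) := by ring
  exact exponent_sub ▸ hab i hi j hj

end Exponential

section Gaussian

variable {ι E F : Type*} [SeminormedAddCommGroup E] [InnerProductSpace ℝ E]

theorem norm_sub_sq_sub_norm_sub_sq_sub (x y z w : E) :
    (‖x - z‖ ^ 2 - ‖y - z‖ ^ 2) - (‖x - w‖ ^ 2 - ‖y - w‖ ^ 2) =
      -(2 * inner ℝ (x - y) (z - w)) := by
  simp only [norm_sub_sq_real, inner_sub_left, inner_sub_right]
  ring

theorem nwGauss_lipschitz_general [SeminormedAddCommGroup F] [NormedSpace ℝ F]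
    {t : Finset ι} (ht : t.Nonempty) {u : ι → E} {v : ι → F} {β Du Dv : ℝ} (hβ : 0 ≤ β)
    (hDu : ∀ i ∈ t, ∀ j ∈ t, ‖u i - u j‖ ≤ Du) (hDv : ∀ i ∈ t, ∀ j ∈ t, ‖v i - v j‖ ≤ Dv)
    (ξ ξ' : E) :
    ‖t.centerMass (fun i => Real.exp (-(‖ξ - u i‖ ^ 2) * β)) v -
        t.centerMass (fun i => Real.exp (-(‖ξ' - u i‖ ^ 2) * β)) v‖ ≤
      2 * Du * Dv * β * ‖ξ - ξ'‖ := by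
  have exponent_le : ∀ i ∈ t, ∀ j ∈ t,
      |(-(‖ξ - u i‖ ^ 2) * β - -(‖ξ' - u i‖ ^ 2) * β) -
        (-(‖ξ - u j‖ ^ 2) * β - -(‖ξ' - u j‖ ^ 2) * β)| ≤ 2 * β * (‖ξ - ξ'‖ * Du) := by
    intro i hi j hj
    calc _ = |2 * β * inner ℝ (ξ - ξ') (u i - u j)| := by
          congr 1
          linear_combination -β * norm_sub_sq_sub_norm_sub_sq_sub ξ ξ' (u i) (u j)
      _ = 2 * β * |inner ℝ (ξ - ξ') (u i - u j)| := by
          rw [abs_mul, abs_of_nonneg (by positivity)]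
      _ ≤ 2 * β * (‖ξ - ξ'‖ * ‖u i - u j‖) := by
          gcongr
          exact abs_real_inner_le_norm _ _
      _ ≤ 2 * β * (‖ξ - ξ'‖ * Du) := by
          gcongr
          exact hDu i hi j hj
  exact (norm_centerMass_exp_sub_centerMass_exp_le ht exponent_le hDv).trans_eq (by ring)

end Gaussian

/-- the Nadaraya–Watson map `G` is Lipschitz continuous with
constant at most `2 D_u D_v / h²`, where `D_u` bounds the diameter of the `u_i` and
`D_v` bounds the diameter of the `v_i`. -/
theorem nwGauss_lipschitz {k : ℕ} (n : ℕ) (hn : 0 < n)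
    (u v : Fin n → Euc k) (h : ℝ) (hh : 0 < h)
    (Du Dv : ℝ)
    (hDu : ∀ i j : Fin n, ‖u i - u j‖ ≤ Du)
    (hDv : ∀ i j : Fin n, ‖v i - v j‖ ≤ Dv) :
    ∀ ξ ξ' : Euc k,
      ‖nwGauss u v h ξ - nwGauss u v h ξ'‖ ≤ (2 * Du * Dv / h ^ 2) * ‖ξ - ξ'‖ := by
  intro ξ ξ'
  have general := nwGauss_lipschitz_general ⟨⟨0, hn⟩, Finset.mem_univ _⟩
    (inv_nonneg.2 (sq_nonneg h)) (fun i _ j _ => hDu i j) (fun i _ j _ => hDv i j) ξ ξ'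
  simpa only [nwGauss, Finset.centerMass, div_eq_mul_inv] using general

end
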